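/- Fix an integer k ≥ 2, rationals μ_1,…,μ_k, and a rational n_0. For 1 ≤ i ≤ k define the polynomial p̄_i ∈ ℚ[n] by p̄_i(n) = Σ_{ℓ=0}^{k} (−2)^ℓ (n−1−ℓ)_{k−ℓ} · e_ℓ(μ_1(n−n_0),…,μ_{i−1}(n−n_0), μ_i(n−n_0)−1, μ_{i+1}(n−n_0),…,μ_k(n−n_0)), where (m)_j = m(m−1)⋯(m−j+1). Then for every 2 ≤ i ≤ k, p̄_1(n) − p̄_i(n) = (μ_1 − μ_i) · Σ_{ℓ=2}^{k} (−2)^ℓ (n−1−ℓ)_{k−ℓ} (n−n_0)^{ℓ−1} · e_{ℓ−2}(μ_2,…,μ_{i−1},μ_{i+1},…,μ_k), as an identity of polynomials in n. -/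

import Mathlib

open Polynomial

/-- `pbar k μ n0 i` is the polynomial
`p̄_i(n) = Σ_{ℓ=0}^{k} (−2)^ℓ (n−1−ℓ)_{k−ℓ} ·
  e_ℓ(μ_1(n−n_0),…,μ_i(n−n_0)−1,…,μ_k(n−n_0)) ∈ ℚ[n]`,
where `(n−1−ℓ)_{k−ℓ} = Π_{t=0}^{k−ℓ−1} (n−1−ℓ−t)`. -/
noncomputable def pbar (k : ℕ) (μ : Fin k → ℚ) (n0 : ℚ) (i : Fin k) : ℚ[X] :=
  ∑ l ∈ Finset.range (k + 1),
    (-2 : ℚ[X]) ^ l *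
      (∏ t ∈ Finset.range (k - l), (X - C ((1 + l + t : ℕ) : ℚ))) *
      ∑ S ∈ Finset.powersetCard l (Finset.univ : Finset (Fin k)),
        ∏ m ∈ S, (C (μ m) * (X - C n0) - if m = i then 1 else 0)

theorem esy_insert {ι R : Type*} [DecidableEq ι] [CommRing R] (f : ι → R) (s : Finset ι) (a : ι)
    (ha : a ∉ s) (l : ℕ) :
    ∑ S ∈ Finset.powersetCard (l + 1) (insert a s), ∏ m ∈ S, f m =
      ∑ S ∈ Finset.powersetCard (l + 1) s, ∏ m ∈ S, f m +
        f a * ∑ S ∈ Finset.powersetCard l s, ∏ m ∈ S, f m := by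
  have hn : ∀ S ∈ Finset.powersetCard l s, a ∉ S := fun S hS h =>
    ha ((Finset.mem_powersetCard.1 hS).1 h)
  rw [Finset.powersetCard_succ_insert ha, Finset.sum_union, Finset.sum_image, Finset.mul_sum]
  · congr 1
    refine Finset.sum_congr rfl fun S hS => ?_
    rw [Finset.prod_insert (hn S hS)]
  · intro S hS T hT h
    have h2 := congrArg (fun U => Finset.erase U a) h
    simpa [Finset.erase_insert (hn S hS), Finset.erase_insert (hn T hT)] using h2
  · rw [Finset.disjoint_left]
    intro S hS hT
    obtain ⟨T, _, rfl⟩ := Finset.mem_image.1 hT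
    exact ha ((Finset.mem_powersetCard.1 hS).1 (Finset.mem_insert_self _ _))

theorem esy_congr {ι R : Type*} [CommRing R] (f g : ι → R) (s : Finset ι)
    (h : ∀ m ∈ s, f m = g m) (l : ℕ) :
    ∑ S ∈ Finset.powersetCard l s, ∏ m ∈ S, f m = ∑ S ∈ Finset.powersetCard l s, ∏ m ∈ S, g m :=
  Finset.sum_congr rfl fun _ hS => Finset.prod_congr rfl fun m hm =>
    h m ((Finset.mem_powersetCard.1 hS).1 hm)

/-- For `k ≥ 2`, rationals `μ_1,…,μ_k`, a rational `n_0`, and `2 ≤ i ≤ k`,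
`p̄_1 − p̄_i = (μ_1 − μ_i) Σ_{ℓ=2}^{k} (−2)^ℓ (n−1−ℓ)_{k−ℓ} (n−n_0)^{ℓ−1}
  e_{ℓ−2}(μ_2,…,μ_{i−1},μ_{i+1},…,μ_k)` as polynomials in `n`. -/
theorem stmt11 (k : ℕ) (hk : 2 ≤ k) (μ : Fin k → ℚ) (n0 : ℚ)
    (i : Fin k) (hi : 1 ≤ (i : ℕ)) :
    pbar k μ n0 ⟨0, by omega⟩ - pbar k μ n0 i =
      C (μ ⟨0, by omega⟩ - μ i) *
        ∑ l ∈ Finset.Icc 2 k,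
          (-2 : ℚ[X]) ^ l *
            (∏ t ∈ Finset.range (k - l), (X - C ((1 + l + t : ℕ) : ℚ))) *
            (X - C n0) ^ (l - 1) *
            C (∑ S ∈ Finset.powersetCard (l - 2)
                  ((Finset.univ.erase (⟨0, by omega⟩ : Fin k)).erase i),
                ∏ m ∈ S, μ m) := by
  have h0i : (⟨0, by omega⟩ : Fin k) ≠ i := by
    intro h
    rw [← h] at hi
    simp at hi
  generalize (⟨0, by omega⟩ : Fin k) = a at *
  set s : Finset (Fin k) := (Finset.univ.erase a).erase i with hs
  have his : i ∉ s := by simp [hs]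
  have hmi : ∀ m ∈ s, m ≠ i ∧ m ≠ a := by
    intro m hm
    simpa [hs] using hm
  have has : a ∉ insert i s := by simp [hs, h0i]
  have hu : (Finset.univ : Finset (Fin k)) = insert a (insert i s) := by
    rw [hs, Finset.insert_erase (by simp [h0i.symm]), Finset.insert_erase (by simp)]
  have hE : ∀ j, (j = a ∨ j = i) → ∀ l,
      ∑ S ∈ Finset.powersetCard l s, ∏ m ∈ S, (C (μ m) * (X - C n0) - if m = j then 1 else 0) =
      (X - C n0) ^ l * C (∑ S ∈ Finset.powersetCard l s, ∏ m ∈ S, μ m) := by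
    intro j hj l
    rw [map_sum, Finset.mul_sum]
    refine Finset.sum_congr rfl fun S hS => ?_
    obtain ⟨hSs, hc⟩ := Finset.mem_powersetCard.1 hS
    rw [map_prod, ← hc, ← Finset.prod_const, ← Finset.prod_mul_distrib]
    refine Finset.prod_congr rfl fun m hm => ?_
    have := hmi m (hSs hm)
    have hmj : m ≠ j := by rcases hj with rfl | rfl <;> tauto
    rw [if_neg hmj]
    ring
  unfold pbar
  rw [← Finset.sum_sub_distrib, Finset.mul_sum]
  symm
  refine Finset.sum_subset_zero_on_sdiff (fun l hl => ?_) (fun l hl => ?_) (fun l hl => ?_)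
  · simp at hl ⊢
    omega
  · have : l = 0 ∨ l = 1 := by
      simp at hl
      omega
    rcases this with rfl | rfl
    · simp
    · rw [hu, esy_insert _ _ _ has 0, esy_insert _ _ _ has 0, esy_insert _ _ _ his 0,
        esy_insert _ _ _ his 0, hE a (Or.inl rfl), hE i (Or.inr rfl)]
      simp [h0i, h0i.symm]
      ring
  · obtain ⟨l, rfl⟩ : ∃ r, l = r + 2 := ⟨l - 2, by simp at hl; omega⟩
    rw [hu, esy_insert _ _ _ has, esy_insert _ _ _ has, esy_insert _ _ _ his,
      esy_insert _ _ _ his, esy_insert _ _ _ his, esy_insert _ _ _ his]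
    simp only [hE a (Or.inl rfl), hE i (Or.inr rfl), if_neg h0i, if_neg h0i.symm, if_true,
      Nat.add_sub_cancel, show l + 2 - 1 = l + 1 from rfl, C_sub]
    ring
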